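/- arXiv:0801.1742 — 3 statements merged into one kernel-verified Lean document; each statement's English description precedes it below -/
import Mathlib

section
/- For the 4n-parametric family of Lie brackets on ℝ^{4n}, the Ricci tensor ρ(y,z) = Σ_{i=1}^{4n} ε_i R(X_i,y,z,X_i), where ε_i = g(X_i,X_i) and R(x,y,z,u) = −¼ g([x,y],[z,u]), has for each α (writing 1̄=4α−3, 2̄=4α−2, 3̄=4α−1, 4̄=4α) the components: ρ(X_1̄,X_1̄) = −½(λ_1̄²+λ_2̄²−λ_4̄²), ρ(X_2̄,X_2̄) = −½(λ_1̄²+λ_2̄²−λ_3̄²), ρ(X_3̄,X_3̄) = ½(λ_2̄²−λ_3̄²−λ_4̄²), ρ(X_4̄,X_4̄) = ½(λ_1̄²−λ_3̄²−λ_4̄²), ρ(X_1̄,X_2̄) = ρ(X_2̄,X_1̄) = −½λ_3̄λ_4̄, ρ(X_1̄,X_3̄) = ρ(X_3̄,X_1̄) = ½λ_1̄λ_3̄, ρ(X_1̄,X_4̄) = ρ(X_4̄,X_1̄) = ½λ_2̄λ_3̄, ρ(X_2̄,X_3̄) = ρ(X_3̄,X_2̄) = ½λ_1̄λ_4̄,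 ρ(X_2̄,X_4̄) = ρ(X_4̄,X_2̄) = ½λ_2̄λ_4̄, ρ(X_3̄,X_4̄) = ρ(X_4̄,X_3̄) = −½λ_1̄λ_2̄, and ρ(X_i,X_j) = 0 whenever X_i and X_j lie in different blocks. -/
noncomputable section

/-- The signature of the basis vectors inside each block: `(+, +, -, -)`. -/
def sgn : Fin 4 → ℝ := ![1, 1, -1, -1]

/-- Structure constants of the bracket inside one block, depending on the four
parameters `l 0 = λ_1̄`, `l 1 = λ_2̄`, `l 2 = λ_3̄`, `l 3 = λ_4̄`:
`sc l r s` is the coordinate vector of `[X_r, X_s]`. -/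
def sc (l : Fin 4 → ℝ) : Fin 4 → Fin 4 → Fin 4 → ℝ :=
  ![![![0, 0, 0, 0], ![0, 0, l 1, -l 0], ![0, l 1, 0, l 3], ![0, -l 0, -l 3, 0]],
    ![![0, 0, -l 1, l 0], ![0, 0, 0, 0], ![-l 1, 0, 0, -l 2], ![l 0, 0, l 2, 0]],
    ![![0, -l 1, 0, -l 3], ![l 1, 0, 0, l 2], ![0, 0, 0, 0], ![-l 3, l 2, 0, 0]],
    ![![0, l 0, l 3, 0], ![-l 0, 0, -l 2, 0], ![l 3, -l 2, 0, 0], ![0, 0, 0, 0]]]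

/-- `V n = ℝ^{4n}`, with coordinates indexed by a block `α : Fin n` and an
offset `r : Fin 4` (offset `r` corresponds to the basis vector `X_{4α+r+1}`,
i.e. `r = 0,1,2,3` correspond to `1̄,2̄,3̄,4̄`). -/
abbrev V (n : ℕ) : Type := Fin n × Fin 4 → ℝ

/-- The `4n`-parametric family of brackets on `ℝ^{4n}`: bilinear, vanishing on
pairs of basis vectors from different blocks, and given inside each block `α`
by the structure constants `sc` with parameters `λ_{4α+1},…,λ_{4α+4}`. -/
def brk {n : ℕ} (lam : Fin n × Fin 4 → ℝ) (x y : V n) : V n := fun p =>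
  ∑ r : Fin 4, ∑ s : Fin 4,
    x (p.1, r) * y (p.1, s) * sc (fun t => lam (p.1, t)) r s p.2

/-- The standard basis vectors `X_i` of `ℝ^{4n}`. -/
def X {n : ℕ} (i : Fin n × Fin 4) : V n := fun j => if j = i then 1 else 0

/-- The Norden metric `g`: the standard basis is orthogonal with
`g(X_1̄,X_1̄) = g(X_2̄,X_2̄) = 1`, `g(X_3̄,X_3̄) = g(X_4̄,X_4̄) = -1` in each block. -/
def gf {n : ℕ} (x y : V n) : ℝ := ∑ p : Fin n × Fin 4, sgn p.2 * x p * y p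

/-- The almost complex structure `J`: `J X_1̄ = X_3̄`, `J X_2̄ = X_4̄`,
`J X_3̄ = -X_1̄`, `J X_4̄ = -X_2̄` in each block. -/
def Jm {n : ℕ} (x : V n) : V n := fun p =>
  ![-x (p.1, 2), -x (p.1, 3), x (p.1, 0), x (p.1, 1)] p.2

/-- The curvature tensor `R(x,y,z,u) = −¼ g([x,y],[z,u])`. -/
def Rc {n : ℕ} (lam : Fin n × Fin 4 → ℝ) (x y z u : V n) : ℝ :=
  -(1 / 4) * gf (brk lam x y) (brk lam z u)

/-- The Ricci tensor `ρ(y,z) = Σ_i ε_i R(X_i,y,z,X_i)` with `ε_i = g(X_i,X_i)`. -/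
def ric {n : ℕ} (lam : Fin n × Fin 4 → ℝ) (y z : V n) : ℝ :=
  ∑ i : Fin n × Fin 4, sgn i.2 * Rc lam (X i) y z (X i)

/-- The table of the components of the Ricci tensor inside one block with
parameters `l 0 = λ_1̄, …, l 3 = λ_4̄`. -/
def rhoTab (l : Fin 4 → ℝ) : Fin 4 → Fin 4 → ℝ :=
  ![![-(l 0 ^ 2 + l 1 ^ 2 - l 3 ^ 2) / 2, -(l 2 * l 3) / 2,
      (l 0 * l 2) / 2, (l 1 * l 2) / 2],
    ![-(l 2 * l 3) / 2, -(l 0 ^ 2 + l 1 ^ 2 - l 2 ^ 2) / 2,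
      (l 0 * l 3) / 2, (l 1 * l 3) / 2],
    ![(l 0 * l 2) / 2, (l 0 * l 3) / 2,
      (l 1 ^ 2 - l 2 ^ 2 - l 3 ^ 2) / 2, -(l 0 * l 1) / 2],
    ![(l 1 * l 2) / 2, (l 1 * l 3) / 2,
      -(l 0 * l 1) / 2, (l 0 ^ 2 - l 2 ^ 2 - l 3 ^ 2) / 2]]

theorem brk_X {n : ℕ} (lam : Fin n × Fin 4 → ℝ) (a b c : Fin n) (r s t : Fin 4) :
    brk lam (X (a, r)) (X (b, s)) (c, t) =
      if c = a then (if c = b then sc (fun t => lam (c, t)) r s t else 0) else 0 := by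
  by_cases h1 : c = a
  · subst h1
    by_cases h2 : c = b
    · subst h2
      simp [brk, X]
    · simp [brk, X, h2]
  · simp [brk, X, h1]

theorem ric_X {n : ℕ} (lam : Fin n × Fin 4 → ℝ) (a b : Fin n) (r s : Fin 4) :
    ric lam (X (a, r)) (X (b, s)) =
      if a = b then ∑ q : Fin 4, sgn q * (-(1 / 4) * ∑ t : Fin 4,
        sgn t * sc (fun t => lam (a, t)) q r t * sc (fun t => lam (a, t)) s q t) else 0 := by
  unfold ric Rc gf
  simp only [Fintype.sum_prod_type, brk_X]
  rw [Finset.sum_eq_single a]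
  · refine Eq.trans (Finset.sum_congr rfl fun q _ => ?_) (b := ∑ q : Fin 4, sgn q * (-(1 / 4) *
      if a = b then ∑ t : Fin 4,
        sgn t * sc (fun t => lam (a, t)) q r t * sc (fun t => lam (a, t)) s q t else 0)) ?_
    · rw [Finset.sum_eq_single a]
      · by_cases h : a = b <;> simp [h]
      · intro c _ hc
        simp [hc]
      · simp
    · by_cases h : a = b <;> simp [h]
  · intro d _ hd
    refine Finset.sum_eq_zero fun q _ => ?_
    rw [Finset.sum_eq_zero, mul_zero, mul_zero]
    intro c _
    refine Finset.sum_eq_zero fun t _ => ?_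
    by_cases h1 : c = a
    · have : c ≠ d := fun h => hd (h.symm.trans h1)
      simp [this]
    · simp [h1]
  · simp

/-- the components of the Ricci tensor on the basis vectors are
exactly the listed ones inside each block (table `rhoTab`), and
`ρ(X_i,X_j) = 0` whenever `X_i`, `X_j` lie in different blocks. -/
theorem ric_components {n : ℕ} (hn : 1 ≤ n) (lam : Fin n × Fin 4 → ℝ) :
    ∀ i j : Fin n × Fin 4,
      ric lam (X i) (X j) =
        if i.1 = j.1 then rhoTab (fun t => lam (i.1, t)) i.2 j.2 else 0 := by
  rintro ⟨a, r⟩ ⟨b, s⟩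
  rw [ric_X]
  by_cases h : a = b
  · simp only [h, if_true]
    fin_cases r <;> fin_cases s <;>
      simp [Fin.sum_univ_four, sgn, sc, rhoTab] <;> ring
  · simp [h]
end
end

section
/- For the 4n-parametric family of Lie brackets on ℝ^{4n}, the following four conditions are equivalent: (i) ‖∇J‖² = 0 (the manifold is isotropic Kähler), where ‖∇J‖² = Σ_{i,k,p} ε_i ε_k ε_p F(X_i,X_k,X_p)² with F(x,y,z) = ½(g([x,Jy],z) − g([x,y],Jz)); (ii) the scalar curvature vanishes, τ = 0, where τ = Σ_i ε_i ρ(X_i,X_i) and ρ(y,z) = Σ_i ε_i R(X_i,y,z,X_i) with R(x,y,z,u) = −¼g([x,y],[z,u]); (iii) the Nijenhuis tensor is isotropic, i.e. ‖N‖² = Σ_{i,j} ε_i ε_j g(N(X_i,X_j),N(X_i,X_j)) = 0, where N(x,y) = [x,y] + J[Jx,y] + J[x,Jy] − [Jx,Jy]; (iv) Σ_{α=1}^{n} (λ_{4α−3}² + λ_{4α−2}² − λ_{4α−1}² − λ_{4α}²) = 0. -/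
noncomputable section

/-- The tensor `F(x,y,z) = ½(g([x,Jy],z) − g([x,y],Jz))`. -/
def Ff {n : ℕ} (lam : Fin n × Fin 4 → ℝ) (x y z : V n) : ℝ :=
  (1 / 2) * (gf (brk lam x (Jm y)) z - gf (brk lam x y) (Jm z))

/-- The Nijenhuis tensor `N(x,y) = [x,y] + J[Jx,y] + J[x,Jy] − [Jx,Jy]`. -/
def Nt {n : ℕ} (lam : Fin n × Fin 4 → ℝ) (x y : V n) : V n :=
  brk lam x y + Jm (brk lam (Jm x) y) + Jm (brk lam x (Jm y)) -
    brk lam (Jm x) (Jm y)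

/-- Block vector. -/
def Bv {n : ℕ} (α : Fin n) (v : Fin 4 → ℝ) : V n := fun p => if p.1 = α then v p.2 else 0

def br4 (l v w : Fin 4 → ℝ) : Fin 4 → ℝ := fun p =>
  ∑ r : Fin 4, ∑ s : Fin 4, v r * w s * sc l r s p

def J4 (v : Fin 4 → ℝ) : Fin 4 → ℝ := ![-v 2, -v 3, v 0, v 1]

def g4 (v w : Fin 4 → ℝ) : ℝ := ∑ p : Fin 4, sgn p * v p * w p

def e4 (a : Fin 4) : Fin 4 → ℝ := fun j => if j = a then 1 else 0

lemma X_eq {n : ℕ} (α : Fin n) (a : Fin 4) : X (α, a) = Bv α (e4 a) := by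
  funext p
  obtain ⟨β, b⟩ := p
  simp only [X, Bv, e4, Prod.mk.injEq]
  by_cases h : β = α <;> simp [h]

lemma Jm_B {n : ℕ} (α : Fin n) (v : Fin 4 → ℝ) : Jm (Bv α v) = Bv α (J4 v) := by
  funext p
  obtain ⟨β, b⟩ := p
  by_cases h : β = α <;> fin_cases b <;> simp [Jm, Bv, J4, h]

lemma brk_B {n : ℕ} (lam : Fin n × Fin 4 → ℝ) (α β : Fin n) (v w : Fin 4 → ℝ) :
    brk lam (Bv α v) (Bv β w) =
      if α = β then Bv α (br4 (fun t => lam (α, t)) v w) else 0 := by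
  funext p
  obtain ⟨γ, c⟩ := p
  by_cases h : γ = α
  · subst h
    by_cases h2 : γ = β
    · simp [brk, Bv, br4, h2]
    · simp [brk, Bv, h2]
  · by_cases h2 : α = β
    · subst h2
      simp [brk, Bv, h]
    · simp [brk, Bv, h, h2]

lemma gf_B {n : ℕ} (α β : Fin n) (v w : Fin 4 → ℝ) :
    gf (Bv α v) (Bv β w) = if α = β then g4 v w else 0 := by
  unfold gf
  rw [Fintype.sum_prod_type, Finset.sum_eq_single α]
  · by_cases h : α = β <;> simp [Bv, g4, h]
  · intro γ _ h
    simp [Bv, h]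
  · simp

lemma gf_zl {n : ℕ} (w : V n) : gf 0 w = 0 := by simp [gf]

lemma Jm_z {n : ℕ} : Jm (0 : V n) = 0 := by
  funext p
  obtain ⟨β, b⟩ := p
  fin_cases b <;> simp [Jm]

lemma Bv_add {n : ℕ} (α : Fin n) (v w : Fin 4 → ℝ) : Bv α v + Bv α w = Bv α (v + w) := by
  funext p
  by_cases h : p.1 = α <;> simp [Bv, h]

lemma Bv_sub {n : ℕ} (α : Fin n) (v w : Fin 4 → ℝ) : Bv α v - Bv α w = Bv α (v - w) := by
  funext p
  by_cases h : p.1 = α <;> simp [Bv, h]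

def F4 (l x y z : Fin 4 → ℝ) : ℝ := (1 / 2) * (g4 (br4 l x (J4 y)) z - g4 (br4 l x y) (J4 z))

def N4 (l x y : Fin 4 → ℝ) : Fin 4 → ℝ :=
  br4 l x y + J4 (br4 l (J4 x) y) + J4 (br4 l x (J4 y)) - br4 l (J4 x) (J4 y)

lemma Ff_X {n : ℕ} (lam : Fin n × Fin 4 → ℝ) (α β γ : Fin n) (a b c : Fin 4) :
    Ff lam (X (α, a)) (X (β, b)) (X (γ, c)) =
      if α = β then if α = γ then F4 (fun t => lam (α, t)) (e4 a) (e4 b) (e4 c) else 0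
      else 0 := by
  simp only [Ff, X_eq, Jm_B, brk_B]
  by_cases h : α = β
  · by_cases h2 : α = γ
    · simp only [h, if_true, gf_B, F4]
      simp [← h, h2]
    · simp only [if_pos h, gf_B, if_neg h2]
      simp
  · simp [h, gf_zl]

lemma Rc_X {n : ℕ} (lam : Fin n × Fin 4 → ℝ) (α β : Fin n) (a b : Fin 4) :
    Rc lam (X (α, a)) (X (β, b)) (X (β, b)) (X (α, a)) =
      if α = β then -(1 / 4) * g4 (br4 (fun t => lam (α, t)) (e4 a) (e4 b))
        (br4 (fun t => lam (α, t)) (e4 b) (e4 a)) else 0 := by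
  simp only [Rc, X_eq, brk_B]
  by_cases h : α = β
  · subst h
    simp [gf_B]
  · simp [h, gf_zl]

lemma gfN_X {n : ℕ} (lam : Fin n × Fin 4 → ℝ) (α β : Fin n) (a b : Fin 4) :
    gf (Nt lam (X (α, a)) (X (β, b))) (Nt lam (X (α, a)) (X (β, b))) =
      if α = β then g4 (N4 (fun t => lam (α, t)) (e4 a) (e4 b))
        (N4 (fun t => lam (α, t)) (e4 a) (e4 b)) else 0 := by
  simp only [Nt, X_eq, Jm_B, brk_B]
  by_cases h : α = β
  · subst h
    simp only [if_true, Jm_B, Bv_add, Bv_sub, gf_B, N4]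
  · simp [h, gf_zl, Jm_z]

lemma e4_0 : e4 0 = ![1, 0, 0, 0] := by funext j; fin_cases j <;> simp [e4]
lemma e4_1 : e4 1 = ![0, 1, 0, 0] := by funext j; fin_cases j <;> simp [e4]
lemma e4_2 : e4 2 = ![0, 0, 1, 0] := by funext j; fin_cases j <;> simp [e4]
lemma e4_3 : e4 3 = ![0, 0, 0, 1] := by funext j; fin_cases j <;> simp [e4]

lemma br4_eq (l v w : Fin 4 → ℝ) : br4 l v w =
    ![-l 1 * (v 1 * w 2 - v 2 * w 1) + l 0 * (v 1 * w 3 - v 3 * w 1)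
        - l 3 * (v 2 * w 3 - v 3 * w 2),
      l 1 * (v 0 * w 2 - v 2 * w 0) - l 0 * (v 0 * w 3 - v 3 * w 0)
        + l 2 * (v 2 * w 3 - v 3 * w 2),
      l 1 * (v 0 * w 1 - v 1 * w 0) - l 3 * (v 0 * w 3 - v 3 * w 0)
        + l 2 * (v 1 * w 3 - v 3 * w 1),
      -l 0 * (v 0 * w 1 - v 1 * w 0) + l 3 * (v 0 * w 2 - v 2 * w 0)
        - l 2 * (v 1 * w 2 - v 2 * w 1)] := by
  funext p
  fin_cases p <;> simp [br4, sc, Fin.sum_univ_four] <;> ring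

lemma g4_eq (v w : Fin 4 → ℝ) : g4 v w = v 0 * w 0 + v 1 * w 1 - v 2 * w 2 - v 3 * w 3 := by
  simp [g4, sgn, Fin.sum_univ_four]
  ring

def q4 (l : Fin 4 → ℝ) : ℝ := l 0 ^ 2 + l 1 ^ 2 - l 2 ^ 2 - l 3 ^ 2

lemma blockF (l : Fin 4 → ℝ) : ∑ a, ∑ b, ∑ c,
    sgn a * sgn b * sgn c * F4 l (e4 a) (e4 b) (e4 c) ^ 2 = 4 * q4 l := by
  simp [Fin.sum_univ_four, F4, g4_eq, br4_eq, J4, e4_0, e4_1, e4_2, e4_3, sgn, q4]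
  ring

lemma blockR (l : Fin 4 → ℝ) : ∑ a, ∑ b,
    sgn a * (sgn b * (-(1 / 4) * g4 (br4 l (e4 b) (e4 a)) (br4 l (e4 a) (e4 b))))
      = -(3 / 2) * q4 l := by
  simp [Fin.sum_univ_four, g4_eq, br4_eq, e4_0, e4_1, e4_2, e4_3, sgn, q4]
  ring

lemma blockN (l : Fin 4 → ℝ) : ∑ a, ∑ b,
    sgn a * sgn b * g4 (N4 l (e4 a) (e4 b)) (N4 l (e4 a) (e4 b)) = -32 * q4 l := by
  simp [Fin.sum_univ_four, N4, g4_eq, br4_eq, J4, e4_0, e4_1, e4_2, e4_3, sgn, q4]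
  ring

lemma sum2 {n : ℕ} (α : Fin n) (f : Fin 4 → ℝ) :
    ∑ p : Fin n × Fin 4, (if α = p.1 then f p.2 else 0) = ∑ b, f b := by
  rw [Fintype.sum_prod_type, Finset.sum_eq_single α]
  · simp
  · intro γ _ h
    simp [Ne.symm h]
  · simp

lemma totF {n : ℕ} (lam : Fin n × Fin 4 → ℝ) :
    (∑ i : Fin n × Fin 4, ∑ k : Fin n × Fin 4, ∑ p : Fin n × Fin 4,
        sgn i.2 * sgn k.2 * sgn p.2 * Ff lam (X i) (X k) (X p) ^ 2)
      = 4 * ∑ α : Fin n, q4 (fun t => lam (α, t)) := by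
  rw [Finset.mul_sum, Fintype.sum_prod_type]
  refine Finset.sum_congr rfl fun α _ => ?_
  rw [← blockF]
  refine Finset.sum_congr rfl fun a _ => ?_
  rw [← sum2 α]
  refine Finset.sum_congr rfl fun k _ => ?_
  obtain ⟨β, b⟩ := k
  split_ifs with h
  · rw [← sum2 α]
    refine Finset.sum_congr rfl fun p _ => ?_
    obtain ⟨γ, c⟩ := p
    dsimp only at h ⊢
    rw [Ff_X, if_pos h]
    split_ifs <;> simp
  · refine Finset.sum_eq_zero fun p _ => ?_
    obtain ⟨γ, c⟩ := p
    dsimp only at h ⊢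
    rw [Ff_X, if_neg h]
    simp

lemma totR {n : ℕ} (lam : Fin n × Fin 4 → ℝ) :
    (∑ i : Fin n × Fin 4, sgn i.2 * ric lam (X i) (X i))
      = -(3 / 2) * ∑ α : Fin n, q4 (fun t => lam (α, t)) := by
  rw [Finset.mul_sum, Fintype.sum_prod_type]
  refine Finset.sum_congr rfl fun α _ => ?_
  rw [← blockR]
  refine Finset.sum_congr rfl fun a _ => ?_
  rw [← sum2 α, ric, Finset.mul_sum]
  refine Finset.sum_congr rfl fun k _ => ?_
  obtain ⟨β, b⟩ := k
  rw [Rc_X]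
  by_cases h : α = β
  · subst h
    simp
  · simp [h, Ne.symm h]

lemma totN {n : ℕ} (lam : Fin n × Fin 4 → ℝ) :
    (∑ i : Fin n × Fin 4, ∑ j : Fin n × Fin 4,
        sgn i.2 * sgn j.2 * gf (Nt lam (X i) (X j)) (Nt lam (X i) (X j)))
      = -32 * ∑ α : Fin n, q4 (fun t => lam (α, t)) := by
  rw [Finset.mul_sum, Fintype.sum_prod_type]
  refine Finset.sum_congr rfl fun α _ => ?_
  rw [← blockN]
  refine Finset.sum_congr rfl fun a _ => ?_
  rw [← sum2 α]
  refine Finset.sum_congr rfl fun k _ => ?_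
  obtain ⟨β, b⟩ := k
  rw [gfN_X]
  by_cases h : α = β <;> simp [h]

/-- the following are equivalent:
(i) `‖∇J‖² = 0` (the manifold is isotropic Kähler);
(ii) the scalar curvature vanishes, `τ = 0`;
(iii) the Nijenhuis tensor is isotropic, `‖N‖² = 0`;
(iv) `Σ_α (λ_{4α−3}² + λ_{4α−2}² − λ_{4α−1}² − λ_{4α}²) = 0`. -/
theorem isotropic_Kahler_tfae {n : ℕ} (hn : 1 ≤ n) (lam : Fin n × Fin 4 → ℝ) :
    [(∑ i : Fin n × Fin 4, ∑ k : Fin n × Fin 4, ∑ p : Fin n × Fin 4,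
        sgn i.2 * sgn k.2 * sgn p.2 * Ff lam (X i) (X k) (X p) ^ 2) = 0,
      (∑ i : Fin n × Fin 4, sgn i.2 * ric lam (X i) (X i)) = 0,
      (∑ i : Fin n × Fin 4, ∑ j : Fin n × Fin 4,
        sgn i.2 * sgn j.2 * gf (Nt lam (X i) (X j)) (Nt lam (X i) (X j))) = 0,
      (∑ α : Fin n,
        (lam (α, 0) ^ 2 + lam (α, 1) ^ 2 - lam (α, 2) ^ 2 - lam (α, 3) ^ 2)) = 0].TFAE := by
  rw [totF, totR, totN]
  change [4 * (∑ α : Fin n, q4 (fun t => lam (α, t))) = 0,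
    -(3 / 2) * (∑ α : Fin n, q4 (fun t => lam (α, t))) = 0,
    -32 * (∑ α : Fin n, q4 (fun t => lam (α, t))) = 0,
    (∑ α : Fin n, q4 (fun t => lam (α, t))) = 0].TFAE
  generalize (∑ α : Fin n, q4 (fun t => lam (α, t))) = S
  tfae_have 1 ↔ 4 := by constructor <;> intro h <;> linarith
  tfae_have 2 ↔ 4 := by constructor <;> intro h <;> linarith
  tfae_have 3 ↔ 4 := by constructor <;> intro h <;> linarith
  tfae_finish
end
end

section
/- For the 4n-parametric family of Lie brackets on ℝ^{4n} and a fixed α (writing 1̄=4α−3, 2̄=4α−2, 3̄=4α−1, 4̄=4α), the manifold does not admit constant totally real sectional curvatures: if the sectional curvatures of the four basic totally real 2-planes are all equal, k(X_1̄,X_2̄) = k(X_1̄,X_4̄) = k(X_2̄,X_3̄) = k(X_3̄,X_4̄), then λ_1̄ = λ_2̄ = λ_3̄ = λ_4̄ = 0 (and all these curvatures are zero). -/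
noncomputable section

/-- The sectional curvature `k(x,y) = R(x,y,y,x)/(g(x,x)g(y,y) − g(x,y)²)`. -/
def sect {n : ℕ} (lam : Fin n × Fin 4 → ℝ) (x y : V n) : ℝ :=
  Rc lam x y y x / (gf x x * gf y y - gf x y ^ 2)

theorem aux_brk {n : ℕ} (lam : Fin n × Fin 4 → ℝ) (α : Fin n) (a b : Fin 4) :
    brk lam (X (α, a)) (X (α, b)) =
      fun p => if p.1 = α then sc (fun t => lam (α, t)) a b p.2 else 0 := by
  funext p
  obtain ⟨β, c⟩ := p
  by_cases h : β = α
  · subst h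
    simp [brk, X, Prod.mk.injEq, ite_and]
  · simp [brk, X, h]

theorem aux_gf {n : ℕ} (α : Fin n) (u v : Fin 4 → ℝ) :
    gf (fun p : Fin n × Fin 4 => if p.1 = α then u p.2 else 0)
      (fun p => if p.1 = α then v p.2 else 0) =
      u 0 * v 0 + u 1 * v 1 - u 2 * v 2 - u 3 * v 3 := by
  unfold gf
  rw [Fintype.sum_prod_type, Finset.sum_eq_single α]
  · simp [Fin.sum_univ_four, sgn]
    ring
  · intro β _ h
    simp [h]
  · simp

theorem aux_X {n : ℕ} (α : Fin n) (a b : Fin 4) :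
    gf (X (α, a) : V n) (X (α, b)) = if a = b then sgn a else 0 := by
  unfold gf X
  rw [Finset.sum_eq_single (α, a)]
  · simp
  · intro p _ h
    simp [h]
  · simp

theorem aux_sect {n : ℕ} (lam : Fin n × Fin 4 → ℝ) (α : Fin n) :
    sect lam (X (α, 0)) (X (α, 1)) = -(lam (α, 0) ^ 2 + lam (α, 1) ^ 2) / 4 ∧
    sect lam (X (α, 0)) (X (α, 3)) = -(lam (α, 0) ^ 2 - lam (α, 3) ^ 2) / 4 ∧
    sect lam (X (α, 1)) (X (α, 2)) = -(lam (α, 1) ^ 2 - lam (α, 2) ^ 2) / 4 ∧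
    sect lam (X (α, 2)) (X (α, 3)) = (lam (α, 2) ^ 2 + lam (α, 3) ^ 2) / 4 := by
  unfold sect Rc
  simp only [aux_brk, aux_gf]
  simp only [aux_X]
  refine ⟨?_, ?_, ?_, ?_⟩ <;> simp [sc, sgn] <;> ring

/-- the manifold does not admit constant totally real sectional
curvatures: if the sectional curvatures of the four basic totally real
2-planes `span{X_1̄,X_2̄}`, `span{X_1̄,X_4̄}`, `span{X_2̄,X_3̄}`,
`span{X_3̄,X_4̄}` are all equal, then `λ_1̄ = λ_2̄ = λ_3̄ = λ_4̄ = 0` and all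
these curvatures are zero. -/
theorem no_constant_totally_real_curvature {n : ℕ} (hn : 1 ≤ n)
    (lam : Fin n × Fin 4 → ℝ) :
    ∀ α : Fin n,
      sect lam (X (α, 0)) (X (α, 1)) = sect lam (X (α, 0)) (X (α, 3)) →
      sect lam (X (α, 0)) (X (α, 3)) = sect lam (X (α, 1)) (X (α, 2)) →
      sect lam (X (α, 1)) (X (α, 2)) = sect lam (X (α, 2)) (X (α, 3)) →
        lam (α, 0) = 0 ∧ lam (α, 1) = 0 ∧ lam (α, 2) = 0 ∧ lam (α, 3) = 0 ∧
          sect lam (X (α, 0)) (X (α, 1)) = 0 := by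
  intro α
  obtain ⟨e1, e2, e3, e4⟩ := aux_sect lam α
  rw [e1, e2, e3, e4]
  intro h1 h2 h3
  have h1' : lam (α, 1) = 0 := by
    apply pow_eq_zero_iff (two_ne_zero) |>.1
    nlinarith [sq_nonneg (lam (α, 1)), sq_nonneg (lam (α, 3))]
  have h3' : lam (α, 3) = 0 := by
    apply pow_eq_zero_iff (two_ne_zero) |>.1
    nlinarith [sq_nonneg (lam (α, 1)), sq_nonneg (lam (α, 3))]
  rw [h1', h3'] at *
  have h0' : lam (α, 0) = 0 := by
    apply pow_eq_zero_iff (two_ne_zero) |>.1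
    nlinarith [sq_nonneg (lam (α, 0)), sq_nonneg (lam (α, 2))]
  have h2' : lam (α, 2) = 0 := by
    apply pow_eq_zero_iff (two_ne_zero) |>.1
    nlinarith [sq_nonneg (lam (α, 0)), sq_nonneg (lam (α, 2))]
  refine ⟨h0', rfl, h2', rfl, ?_⟩
  rw [h0']
  norm_num
end
end
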